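/- arXiv:1906.09541 — 2 statements merged into one kernel-verified Lean document; each statement's English description precedes it below -/
import Mathlib

section
/- Let a be a channel, let G = μX.(⅓τ.(a.0 + τ.X) ⊕ ⅔τ.X) and G_a = a.0 + τ.G, where a.T' + τ.T abbreviates (c)(c̄.0 | (a.T' + c.T)) for a fresh channel c. Then the equivalence closure of the single pair {(G, G_a)} is a codivergent branching bisimulation on P_RCCS; in particular G =_RCCS a.0 + τ.G. -/
/-!
Formalization of RCCS (Randomized CCS) following the paper
"A Uniform Framework for Probabilistic Process Models".
Channels form a type `Chan`; terms use de Bruijn indices for process variables.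
-/

noncomputable section
open scoped Classical

/-- RCCS terms over a set of channels, with de Bruijn process variables.
`sum n α T` is the nondeterministic choice `Σ_{i∈[n]} α_i.T_i` (guards are
names `Sum.inl a` or conames `Sum.inr a`); `rand n p T` is the random choice
`⊕_{i∈[n]} p_i τ.T_i`; `par` is composition, `loc a T` is localization `(a)T`,
and `fix T` is the fixpoint `μX.T`. -/
inductive Tm (Chan : Type) : Type
  | var : ℕ → Tm Chan
  | sum : (n : ℕ) → (Fin n → Chan ⊕ Chan) → (Fin n → Tm Chan) → Tm Chan
  | rand : (n : ℕ) → (Fin n → ℝ) → (Fin n → Tm Chan) → Tm Chan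
  | par : Tm Chan → Tm Chan → Tm Chan
  | loc : Chan → Tm Chan → Tm Chan
  | fix : Tm Chan → Tm Chan

variable {Chan : Type}

/-- Labels: names, conames, and `tau p` for `p ∈ (0,1]`; `tau 1` is the plain
silent action `τ`, identified with `1τ`. -/
inductive Lab (Chan : Type) : Type
  | name : Chan → Lab Chan
  | coname : Chan → Lab Chan
  | tau : ℝ → Lab Chan

/-- The label of an external prefix. -/
def guardLab : Chan ⊕ Chan → Lab Chan
  | .inl a => .name a
  | .inr a => .coname a

/-- A label is an action in `Act` if it is a name, a coname, or `τ = 1τ`. -/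
def Lab.IsAct : Lab Chan → Prop
  | .name _ => True
  | .coname _ => True
  | .tau p => p = 1

/-- Shift de Bruijn indices `≥ c` up by one. -/
def Tm.lift : ℕ → Tm Chan → Tm Chan
  | c, .var n => .var (if n < c then n else n + 1)
  | c, .sum n α T => .sum n α fun i => Tm.lift c (T i)
  | c, .rand n p T => .rand n p fun i => Tm.lift c (T i)
  | c, .par S T => .par (Tm.lift c S) (Tm.lift c T)
  | c, .loc a T => .loc a (Tm.lift c T)
  | c, .fix T => .fix (Tm.lift (c + 1) T)

/-- Capture-avoiding substitution of the term `S` for variable `c`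
(other variables above `c` are shifted down). -/
def Tm.inst : ℕ → Tm Chan → Tm Chan → Tm Chan
  | c, S, .var n => if n < c then .var n else if n = c then S else .var (n - 1)
  | c, S, .sum n α T => .sum n α fun i => Tm.inst c S (T i)
  | c, S, .rand n p T => .rand n p fun i => Tm.inst c S (T i)
  | c, S, .par S' T => .par (Tm.inst c S S') (Tm.inst c S T)
  | c, S, .loc a T => .loc a (Tm.inst c S T)
  | c, S, .fix T => .fix (Tm.inst (c + 1) (Tm.lift 0 S) T)

/-- All free variables are `< k`. -/
def Tm.ClosedAt : ℕ → Tm Chan → Prop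
  | k, .var n => n < k
  | k, .sum _ _ T => ∀ i, Tm.ClosedAt k (T i)
  | k, .rand _ _ T => ∀ i, Tm.ClosedAt k (T i)
  | k, .par S T => Tm.ClosedAt k S ∧ Tm.ClosedAt k T
  | k, .loc _ T => Tm.ClosedAt k T
  | k, .fix T => Tm.ClosedAt (k + 1) T

/-- Variable `v` is guarded: every free occurrence of `v` is under a prefix. -/
def Tm.Guarded : ℕ → Tm Chan → Prop
  | v, .var n => n ≠ v
  | _, .sum _ _ _ => True
  | _, .rand _ _ _ => True
  | v, .par S T => Tm.Guarded v S ∧ Tm.Guarded v T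
  | v, .loc _ T => Tm.Guarded v T
  | v, .fix T => Tm.Guarded (v + 1) T

/-- Well-formedness: in every random choice `⊕_{i∈I} p_i τ.T_i` we have `|I| ≥ 2`,
`p_i ∈ (0,1)` and `Σ_i p_i = 1`; in every fixpoint `μX.T` the variable `X` is
guarded in `T`. -/
def Tm.WF : Tm Chan → Prop
  | .var _ => True
  | .sum _ _ T => ∀ i, Tm.WF (T i)
  | .rand n p T => 2 ≤ n ∧ (∀ i, 0 < p i ∧ p i < 1) ∧ (∑ i, p i) = 1 ∧ ∀ i, Tm.WF (T i)
  | .par S T => Tm.WF S ∧ Tm.WF T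
  | .loc _ T => Tm.WF T
  | .fix T => Tm.Guarded 0 T ∧ Tm.WF T

/-- A term with no random choice, i.e. a CCS term. -/
def Tm.NoRand : Tm Chan → Prop
  | .var _ => True
  | .sum _ _ T => ∀ i, Tm.NoRand (T i)
  | .rand _ _ _ => False
  | .par S T => Tm.NoRand S ∧ Tm.NoRand T
  | .loc _ T => Tm.NoRand T
  | .fix T => Tm.NoRand T

/-- The transition relation of RCCS. -/
inductive Step : Tm Chan → Lab Chan → Tm Chan → Prop
  | sum {n α T} (i : Fin n) : Step (.sum n α T) (guardLab (α i)) (T i)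
  | rand {n p T} (i : Fin n) : Step (.rand n p T) (.tau (p i)) (T i)
  | comL {S S' T T' a} : Step S (.name a) S' → Step T (.coname a) T' →
      Step (.par S T) (.tau 1) (.par S' T')
  | comR {S S' T T' a} : Step S (.coname a) S' → Step T (.name a) T' →
      Step (.par S T) (.tau 1) (.par S' T')
  | parL {S S' T l} : Step S l S' → Step (.par S T) l (.par S' T)
  | parR {S T T' l} : Step T l T' → Step (.par S T) l (.par S T')
  | loc {T T' l} (a : Chan) : Step T l T' → l ≠ .name a → l ≠ .coname a →
      Step (.loc a T) l (.loc a T')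
  | fix {T T' l} : Step (Tm.inst 0 (.fix T) T) l T' → Step (.fix T) l T'

/-- Collective silent transitions `B →^{∐_{i∈[n]} p_i τ} ∐_{i∈[n]} B_i`,
arising from a single random choice and closed under composition,
localization and recursion. -/
inductive CStep : Tm Chan → (n : ℕ) → (Fin n → ℝ) → (Fin n → Tm Chan) → Prop
  | rand {n p T} : CStep (.rand n p T) n p T
  | parL {S T n p S'} : CStep S n p S' → CStep (.par S T) n p fun i => .par (S' i) T
  | parR {S T n p T'} : CStep T n p T' → CStep (.par S T) n p fun i => .par S (T' i)
  | loc {T n p T'} (a : Chan) : CStep T n p T' → CStep (.loc a T) n p fun i => .loc a (T' i)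
  | fix {T n p T'} : CStep (Tm.inst 0 (.fix T) T) n p T' → CStep (.fix T) n p T'

/-- The set `P_RCCS` of RCCS processes: closed well-formed terms. -/
def Proc (Chan : Type) : Type := {T : Tm Chan // T.ClosedAt 0 ∧ T.WF}

/-- A (potential) silent tree: nodes are addressed by reversed lists of child
indices (the root is `[]`, the `i`-th child of `σ` is `i :: σ`); each node
carries a process label and the probability labelling its incoming edge
(the root carries `1`). -/
structure PTree (Chan : Type) where
  node : List ℕ → Option (Proc Chan × ℝ)

namespace PTree

variable (t : PTree Chan)

/-- The address `σ` is a node of the tree. -/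
def hasNode (σ : List ℕ) : Prop := (t.node σ).isSome

/-- The probability labelling the incoming edge of the node at `σ`. -/
def edgeProb (σ : List ℕ) : ℝ := ((t.node σ).map Prod.snd).getD 0

/-- The probability of the path from the root to `σ`: the product of the edge
labels along it (`1` for the empty path). -/
def pathProb (t : PTree Chan) : List ℕ → ℝ
  | [] => 1
  | i :: σ => t.edgeProb (i :: σ) * pathProb t σ

/-- `σ` is a leaf. -/
def IsLeaf (σ : List ℕ) : Prop := t.hasNode σ ∧ ¬ t.hasNode (0 :: σ)

/-- `P(t↾_k)`: the sum of the probabilities of the branches of the truncation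
of `t` at depth `k` (a branch of `t↾_k` ends either at depth `k` or at a leaf
of `t` of depth `< k`). -/
def truncProb (k : ℕ) : ℝ :=
  ∑' σ : List ℕ,
    if t.hasNode σ ∧ (σ.length = k ∨ (σ.length < k ∧ ¬ t.hasNode (0 :: σ)))
    then t.pathProb σ else 0

/-- `P^k(t)`: the sum of the probabilities of the finite branches of `t` of
length at most `k`. -/
def finBranchProb (k : ℕ) : ℝ :=
  ∑' σ : List ℕ, if t.IsLeaf σ ∧ σ.length ≤ k then t.pathProb σ else 0

/-- `t` is regular: `P^f(t) = lim_k P^k(t) = 1`. -/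
def Regular : Prop := Filter.Tendsto t.finBranchProb Filter.atTop (nhds 1)

/-- `t` is divergent: `P^f(t) = lim_k P^k(t) = 0`. -/
def Divergent : Prop := Filter.Tendsto t.finBranchProb Filter.atTop (nhds 0)

end PTree

/-- `t` is a silent tree of `A`: the root is labeled `A`, the node set is
prefix-closed with children indexed by an initial segment of `ℕ`, the tree is
finitely branching, and every edge labeled `p` from `B` to `B'` satisfies
`p ∈ (0,1]` and `B →^{pτ} B'`. -/
def IsSilentTree (A : Proc Chan) (t : PTree Chan) : Prop :=
  t.node [] = some (A, 1) ∧
  (∀ i σ, t.hasNode (i :: σ) → t.hasNode σ) ∧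
  (∀ i j σ, j ≤ i → t.hasNode (i :: σ) → t.hasNode (j :: σ)) ∧
  (∀ σ, ∃ n, ∀ i, n ≤ i → ¬ t.hasNode (i :: σ)) ∧
  (∀ σ i B p B' p', t.node σ = some (B, p) → t.node (i :: σ) = some (B', p') →
    0 < p' ∧ p' ≤ 1 ∧ Step B.val (.tau p') B'.val)

/-- An ε-tree of `A` with regard to `E`: an `E`-tree of `A` (all node labels lie
in `[A]_E`) such that (1) any edge labeled `q < 1` out of a node `B` comes from a
collective random transition whose targets are exactly the children of `B`, and
(2) an edge labeled `1` out of `B` is a transition `B →^τ B'` to the unique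
child `B'` of `B`. -/
def IsETree (E : Proc Chan → Proc Chan → Prop) (A : Proc Chan) (t : PTree Chan) : Prop :=
  IsSilentTree A t ∧
  (∀ σ B p, t.node σ = some (B, p) → E A B) ∧
  (∀ σ i B p B' q, t.node σ = some (B, p) → t.node (i :: σ) = some (B', q) → q < 1 →
    ∃ n ps Ts, CStep B.val n ps Ts ∧
      (∀ j : ℕ, t.hasNode (j :: σ) ↔ j < n) ∧
      (∀ j : Fin n, ∃ C : Proc Chan, C.val = Ts j ∧ t.node ((j : ℕ) :: σ) = some (C, ps j))) ∧
  (∀ σ i B p B', t.node σ = some (B, p) → t.node (i :: σ) = some (B', 1) →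
    Step B.val (.tau 1) B'.val ∧ i = 0 ∧ ¬ t.hasNode (1 :: σ))

/-- The `E`-class of `A`. -/
def classOf (E : Proc Chan → Proc Chan → Prop) (A : Proc Chan) : Set (Proc Chan) := {B | E A B}

/-- `C` is an equivalence class of `E`. -/
def IsClass (E : Proc Chan → Proc Chan → Prop) (C : Set (Proc Chan)) : Prop :=
  ∃ A, C = classOf E A

/-- An equivalence `E` on `P_RCCS` is codivergent if for every `E`-class either
all members have a divergent ε-tree with regard to `E` or none does. -/
def Codivergent (E : Proc Chan → Proc Chan → Prop) : Prop :=
  ∀ A B, E A B →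
    ((∃ t, IsETree E A t ∧ t.Divergent) ↔ (∃ t, IsETree E B t ∧ t.Divergent))

/-- An ℓ-transition `A ⇝_E →^ℓ C`: a regular ε-tree of `A` with regard to `E`
such that every leaf `L` has a transition `L →^ℓ L'` with `L' ∈ C`. -/
def LTrans (E : Proc Chan → Proc Chan → Prop) (A : Proc Chan) (l : Lab Chan)
    (C : Set (Proc Chan)) : Prop :=
  ∃ t, IsETree E A t ∧ t.Regular ∧
    ∀ σ L p, t.node σ = some (L, p) → ¬ t.hasNode (0 :: σ) →
      ∃ L' ∈ C, Step L.val l L'.val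

/-- The raw term `T` belongs to the set `C` of processes. -/
def inC (C : Set (Proc Chan)) (T : Tm Chan) : Prop := ∃ P ∈ C, P.val = T

/-- `P(L → C)` of a collective silent transition: the sum of the `p_i` whose
target lies in `C`. -/
def collProb (C : Set (Proc Chan)) {n : ℕ} (ps : Fin n → ℝ) (Ts : Fin n → Tm Chan) : ℝ :=
  ∑ i, if inC C (Ts i) then ps i else 0

/-- A `q`-transition `A ⇝_E →^q C`: a regular ε-tree of `A` with regard to `E`
such that every leaf has a collective silent transition whose weighted
probability `P_E(L → C) = P(L → C)/(1 − P(L → [A]_E))` of reaching `C` is `q`. -/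
def QTrans (E : Proc Chan → Proc Chan → Prop) (A : Proc Chan) (q : ℝ)
    (C : Set (Proc Chan)) : Prop :=
  ∃ t, IsETree E A t ∧ t.Regular ∧
    ∀ σ L p, t.node σ = some (L, p) → ¬ t.hasNode (0 :: σ) →
      ∃ (n : ℕ) (ps : Fin n → ℝ) (Ts : Fin n → Tm Chan), CStep L.val n ps Ts ∧
        collProb C ps Ts / (1 - collProb (classOf E A) ps Ts) = q

/-- `E` is a branching bisimulation on `P_RCCS`: an equivalence such that
(1) ℓ-transitions with `ℓ ≠ τ ∨ C ≠ [A]_E` are bisimulated by all members of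
`[A]_E`, and (2) likewise for `q`-transitions with `q ∈ (0,1]` and `C ≠ [A]_E`. -/
def IsBB (E : Proc Chan → Proc Chan → Prop) : Prop :=
  Equivalence E ∧
  (∀ A B l C, l.IsAct → IsClass E C → E A B → (l ≠ Lab.tau 1 ∨ C ≠ classOf E A) →
    LTrans E A l C → LTrans E B l C) ∧
  (∀ A B q C, 0 < q → q ≤ 1 → IsClass E C → E A B → C ≠ classOf E A →
    QTrans E A q C → QTrans E B q C)

/-- `E` is a codivergent branching bisimulation on `P_RCCS`. -/
def IsCBB (E : Proc Chan → Proc Chan → Prop) : Prop := IsBB E ∧ Codivergent E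

/-- `=_RCCS`, the largest codivergent branching bisimulation: the union of all
codivergent branching bisimulations. -/
def RccsEq (A B : Proc Chan) : Prop := ∃ E, IsCBB E ∧ E A B

/-! ### Concrete processes -/

/-- The empty nondeterministic choice `0`. -/
def Tm.nil : Tm Chan := .sum 0 Fin.elim0 Fin.elim0

/-- The prefix `α.T`. -/
def pfx (g : Chan ⊕ Chan) (T : Tm Chan) : Tm Chan := .sum 1 (fun _ => g) (fun _ => T)

/-- The binary choice `α₁.T₁ + α₂.T₂`. -/
def sum2 (g₁ g₂ : Chan ⊕ Chan) (T₁ T₂ : Tm Chan) : Tm Chan := .sum 2 ![g₁, g₂] ![T₁, T₂]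

/-- The binary random choice `pτ.T₁ ⊕ qτ.T₂`. -/
def rand2 (p q : ℝ) (T₁ T₂ : Tm Chan) : Tm Chan := .rand 2 ![p, q] ![T₁, T₂]

/-- `a.0`. -/
def aNil (a : Chan) : Tm Chan := pfx (Sum.inl a) Tm.nil

/-- `c̄.0`. -/
def coNil (c : Chan) : Tm Chan := pfx (Sum.inr c) Tm.nil

/-- `Ω_{½a} = μX.(½τ.a.0 ⊕ ½τ.X)`. -/
def omegaHalfTm (a : Chan) : Tm Chan := .fix (rand2 (1/2) (1/2) (aNil a) (.var 0))

lemma omegaHalf_spec (a : Chan) : (omegaHalfTm a).ClosedAt 0 ∧ (omegaHalfTm a).WF := by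
  refine ⟨?_, ?_⟩ <;>
    simp [omegaHalfTm, rand2, aNil, pfx, Tm.nil, Tm.ClosedAt, Tm.WF, Tm.Guarded,
      Fin.forall_fin_two, Fin.sum_univ_two] <;> norm_num

/-- `Ω_{½a}` as a process. -/
def omegaHalfP (a : Chan) : Proc Chan := ⟨omegaHalfTm a, omegaHalf_spec a⟩

lemma aNil_spec (a : Chan) : (aNil a).ClosedAt 0 ∧ (aNil a).WF := by
  refine ⟨?_, ?_⟩ <;> simp [aNil, pfx, Tm.nil, Tm.ClosedAt, Tm.WF]

/-- `a.0` as a process. -/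
def aNilP (a : Chan) : Proc Chan := ⟨aNil a, aNil_spec a⟩

/-- `a.T' + τ.T`, the abbreviation `(c)(c̄.0 | (a.T' + c.T))` for a fresh `c`. -/
def plusTau (a c : Chan) (T' T : Tm Chan) : Tm Chan :=
  .loc c (.par (coNil c) (sum2 (Sum.inl a) (Sum.inl c) T' T))

/-- `G = μX.(⅓τ.(a.0 + τ.X) ⊕ ⅔τ.X)`. -/
def Gtm (a c : Chan) : Tm Chan :=
  .fix (rand2 (1/3) (2/3) (plusTau a c Tm.nil (.var 0)) (.var 0))

/-- `G_a = a.0 + τ.G`. -/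
def GaTm (a c : Chan) : Tm Chan := plusTau a c Tm.nil (Gtm a c)

lemma Gtm_spec (a c : Chan) : (Gtm a c).ClosedAt 0 ∧ (Gtm a c).WF := by
  refine ⟨?_, ?_⟩ <;>
    simp [Gtm, rand2, plusTau, sum2, coNil, pfx, Tm.nil, Tm.ClosedAt, Tm.WF, Tm.Guarded,
      Fin.forall_fin_two, Fin.sum_univ_two] <;> norm_num

lemma GaTm_spec (a c : Chan) : (GaTm a c).ClosedAt 0 ∧ (GaTm a c).WF := by
  refine ⟨?_, ?_⟩ <;>
    simp [GaTm, Gtm, rand2, plusTau, sum2, coNil, pfx, Tm.nil, Tm.ClosedAt, Tm.WF, Tm.Guarded,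
      Fin.forall_fin_two, Fin.sum_univ_two] <;> norm_num

def GP (a c : Chan) : Proc Chan := ⟨Gtm a c, Gtm_spec a c⟩
def GaP (a c : Chan) : Proc Chan := ⟨GaTm a c, GaTm_spec a c⟩

/-!
`G` keeps tossing a biased coin until it turns into `G_a`. The infinite ε-tree of all these tosses
has only leaves `G_a`, reached with probabilities `1/3 * (2/3) ^ n` summing to `1`, so `G` can do
whatever `G_a` can. Conversely, the tosses are the only transitions of `G` and stay in the class
`{G, G_a}`, so a leaf of an ε-tree that performs an action or leaves the class must be `G_a`.
Neither process diverges: the silent transitions of `G_a` leave the class, so an ε-tree either stops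
at `G` or has a leaf `G_a`, and a single leaf already contributes positive probability.
-/

/-- The equivalence closure of the single pair `{(a, b)}`. -/
abbrev pairClosure {α : Type*} (a b : α) : α → α → Prop :=
  Relation.EqvGen fun x y => x = a ∧ y = b

lemma pairClosure_iff {α : Type*} {a b x y : α} :
    pairClosure a b x y ↔ x = y ∨ x ∈ ({a, b} : Set α) ∧ y ∈ ({a, b} : Set α) := by
  constructor
  · intro h
    induction h with
    | rel x y h => exact .inr ⟨.inl h.1, .inr h.2⟩
    | refl x => exact .inl rfl
    | symm x y _ ih => exact ih.imp Eq.symm And.symm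
    | trans x y z _ _ hxy hyz =>
      rcases hxy with rfl | hxy
      · exact hyz
      rcases hyz with rfl | hyz
      · exact .inr hxy
      · exact .inr ⟨hxy.1, hyz.2⟩
  · rintro (rfl | ⟨rfl | rfl, rfl | rfl⟩)
    exacts [.refl _, .refl _, .rel _ _ ⟨rfl, rfl⟩, .symm _ _ (.rel _ _ ⟨rfl, rfl⟩), .refl _]

lemma classOf_pairClosure {A B X : Proc Chan} (hX : X ∈ ({A, B} : Set (Proc Chan))) :
    classOf (pairClosure A B) X = {A, B} := by
  ext Y
  simp only [classOf, Set.mem_ofPred_eq, pairClosure_iff, hX, true_and, or_iff_right_iff_imp]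
  rintro rfl
  exact hX

lemma IsClass.disjoint_classOf {E : Proc Chan → Proc Chan → Prop} (hE : Equivalence E)
    {C : Set (Proc Chan)} (hC : IsClass E C) {A : Proc Chan} (hne : C ≠ classOf E A) :
    Disjoint C (classOf E A) := by
  obtain ⟨B, rfl⟩ := hC
  rw [Set.disjoint_left]
  intro P hBP hAP
  have hBA : E B A := hE.trans hBP (hE.symm hAP)
  exact hne (Set.ext fun Y => ⟨hE.trans (hE.symm hBA), hE.trans hBA⟩)

lemma collProb_eq_zero {C : Set (Proc Chan)} {n : ℕ} {ps : Fin n → ℝ} {Ts : Fin n → Tm Chan}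
    (h : ∀ i, ¬ inC C (Ts i)) : collProb C ps Ts = 0 :=
  Finset.sum_eq_zero fun i _ => if_neg (h i)

lemma not_step_tau_sum {n : ℕ} {α : Fin n → Chan ⊕ Chan} {T : Fin n → Tm Chan} {q : ℝ}
    {U : Tm Chan} : ¬ Step (.sum n α T) (.tau q) U := by
  generalize hl : Lab.tau q = l
  rintro ⟨i⟩
  rcases hα : α i <;> simp [guardLab, hα] at hl

lemma step_fix_iff {T T' : Tm Chan} {l : Lab Chan} :
    Step (.fix T) l T' ↔ Step (Tm.inst 0 (.fix T) T) l T' :=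
  ⟨fun h => by cases h with | fix h => exact h, .fix⟩

lemma cstep_fix_iff {T : Tm Chan} {n : ℕ} {ps : Fin n → ℝ} {Ts : Fin n → Tm Chan} :
    CStep (.fix T) n ps Ts ↔ CStep (Tm.inst 0 (.fix T) T) n ps Ts :=
  ⟨fun h => by cases h with | fix h => exact h, .fix⟩

lemma CStep.step {S : Tm Chan} {n : ℕ} {ps : Fin n → ℝ} {Ts : Fin n → Tm Chan}
    (h : CStep S n ps Ts) (i : Fin n) : Step S (.tau (ps i)) (Ts i) := by
  induction h with
  | rand => exact .rand i
  | parL _ ih => exact .parL (ih i)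
  | parR _ ih => exact .parR (ih i)
  | loc a _ ih => exact .loc a (ih i) nofun nofun
  | fix _ ih => exact .fix (ih i)

namespace PTree

variable {t : PTree Chan}

lemma hasNode_iff {σ : List ℕ} : t.hasNode σ ↔ ∃ B p, t.node σ = some (B, p) := by
  simp [hasNode, Option.isSome_iff_exists]

lemma edgeProb_eq {σ : List ℕ} {B : Proc Chan} {p : ℝ} (h : t.node σ = some (B, p)) :
    t.edgeProb σ = p := by
  simp [edgeProb, h]

lemma pathProb_pos {A : Proc Chan} (ht : IsSilentTree A t) {σ : List ℕ} (hσ : t.hasNode σ) :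
    0 < t.pathProb σ := by
  obtain ⟨_, hparent, _, _, hedge⟩ := ht
  induction σ with
  | nil => exact one_pos
  | cons i σ ih =>
    obtain ⟨B, p, hB⟩ := hasNode_iff.1 (hparent i σ hσ)
    obtain ⟨B', p', hB'⟩ := hasNode_iff.1 hσ
    have hp' : 0 < p' := (hedge σ i B p B' p' hB hB').1
    rw [pathProb, edgeProb_eq hB']
    exact mul_pos hp' (ih (hparent i σ hσ))

lemma finite_setOf_length_le {A : Proc Chan} (ht : IsSilentTree A t) (k : ℕ) :
    {σ | t.hasNode σ ∧ σ.length ≤ k}.Finite := by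
  obtain ⟨_, hparent, _, hfin, _⟩ := ht
  choose N hN using hfin
  induction k with
  | zero =>
    refine (Set.finite_singleton []).subset ?_
    rintro σ ⟨_, hlen⟩
    simpa using hlen
  | succ k ih =>
    refine ((Set.finite_singleton []).union
      (ih.biUnion fun σ _ => (Set.finite_Iio (N σ)).image (· :: σ))).subset ?_
    rintro (_ | ⟨i, σ⟩) ⟨hnode, hlen⟩
    · exact .inl rfl
    · have hi : i < N σ := not_le.1 fun hle => hN σ i hle hnode
      exact .inr (Set.mem_biUnion ⟨hparent i σ hnode, Nat.le_of_succ_le_succ hlen⟩ ⟨i, hi, rfl⟩)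

lemma pathProb_le_finBranchProb {A : Proc Chan} (ht : IsSilentTree A t) {σ : List ℕ}
    (hσ : t.IsLeaf σ) {k : ℕ} (hk : σ.length ≤ k) : t.pathProb σ ≤ t.finBranchProb k := by
  have hsupp : Function.HasFiniteSupport fun ρ : List ℕ =>
      if t.IsLeaf ρ ∧ ρ.length ≤ k then t.pathProb ρ else 0 :=
    (finite_setOf_length_le ht k).subset fun ρ hρ =>
      have hleaf : t.IsLeaf ρ ∧ ρ.length ≤ k := of_not_not fun hn => hρ (if_neg hn)
      ⟨hleaf.1.1, hleaf.2⟩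
  have hle := (summable_of_hasFiniteSupport (L := .unconditional _) hsupp).le_tsum σ fun ρ _ => by
    split_ifs with hρ
    exacts [(pathProb_pos ht hρ.1.1).le, le_rfl]
  rwa [if_pos ⟨hσ, hk⟩] at hle

lemma not_divergent_of_isLeaf {A : Proc Chan} (ht : IsSilentTree A t) {σ : List ℕ}
    (hσ : t.IsLeaf σ) : ¬ t.Divergent := fun hdiv =>
  have hle : t.pathProb σ ≤ 0 := ge_of_tendsto hdiv <|
    (Filter.eventually_ge_atTop σ.length).mono fun _ hk => pathProb_le_finBranchProb ht hσ hk
  hle.not_gt (pathProb_pos ht hσ.1)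

lemma Regular.exists_isLeaf (h : t.Regular) : ∃ σ, t.IsLeaf σ := by
  by_contra! hnone
  have hzero : t.finBranchProb = fun _ => 0 := by
    funext k
    simp [finBranchProb, hnone]
  rw [Regular, hzero] at h
  exact zero_ne_one (tendsto_nhds_unique tendsto_const_nhds h)

lemma finBranchProb_eq_sum_range {f : ℕ → List ℕ} (hleaf : ∀ σ, t.IsLeaf σ ↔ ∃ n, f n = σ)
    (hlen : ∀ n, (f n).length = n + 1) (k : ℕ) :
    t.finBranchProb k = ∑ n ∈ Finset.range k, t.pathProb (f n) := by
  have hinj : Function.Injective f := fun m n h => by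
    simpa [hlen] using congrArg List.length h
  rw [finBranchProb, tsum_eq_sum (s := (Finset.range k).image f), Finset.sum_image hinj.injOn]
  · refine Finset.sum_congr rfl fun n hn => if_pos ⟨(hleaf _).2 ⟨n, rfl⟩, ?_⟩
    rw [hlen]
    exact Finset.mem_range.1 hn
  · refine fun σ hσ => if_neg ?_
    rintro ⟨hσleaf, hk⟩
    obtain ⟨n, rfl⟩ := (hleaf σ).1 hσleaf
    rw [hlen] at hk
    exact hσ (Finset.mem_image_of_mem f (Finset.mem_range.2 hk))

end PTree

/-- `A` has a regular ε-tree with regard to `E` all of whose leaves satisfy `Φ`: the common shape of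
the ℓ-transitions `LTrans` and the `q`-transitions `QTrans`, which are instances of it by
definitional unfolding. -/
def EpsReaches (E : Proc Chan → Proc Chan → Prop) (A : Proc Chan) (Φ : Proc Chan → Prop) : Prop :=
  ∃ t, IsETree E A t ∧ t.Regular ∧
    ∀ σ L p, t.node σ = some (L, p) → ¬ t.hasNode (0 :: σ) → Φ L

lemma EpsReaches.exists_rel {E : Proc Chan → Proc Chan → Prop} {A : Proc Chan}
    {Φ : Proc Chan → Prop} (h : EpsReaches E A Φ) : ∃ L, E A L ∧ Φ L := by
  obtain ⟨t, ⟨_, hE, _⟩, hreg, hΦ⟩ := h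
  obtain ⟨σ, hσ, hleaf⟩ := hreg.exists_isLeaf
  obtain ⟨L, p, hL⟩ := PTree.hasNode_iff.1 hσ
  exact ⟨L, hE σ L p hL, hΦ σ L p hL hleaf⟩

/-- The tree consisting of its root, labelled `A`, only. -/
def singletonTree (A : Proc Chan) : PTree Chan where
  node σ := if σ = [] then some (A, 1) else none

lemma singletonTree_node_eq_some {A B : Proc Chan} {σ : List ℕ} {p : ℝ} :
    (singletonTree A).node σ = some (B, p) ↔ σ = [] ∧ A = B ∧ 1 = p := by
  simp [singletonTree]

lemma singletonTree_hasNode {A : Proc Chan} {σ : List ℕ} :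
    (singletonTree A).hasNode σ ↔ σ = [] := by
  simp [PTree.hasNode_iff, singletonTree_node_eq_some]

lemma isETree_singletonTree {E : Proc Chan → Proc Chan → Prop} {A : Proc Chan} (hA : E A A) :
    IsETree E A (singletonTree A) := by
  simp [IsETree, IsSilentTree, singletonTree_node_eq_some, singletonTree_hasNode, hA]

lemma regular_singletonTree (A : Proc Chan) : (singletonTree A).Regular := by
  have hone : (singletonTree A).finBranchProb = fun _ => 1 := by
    funext k
    rw [PTree.finBranchProb, tsum_eq_single []]
    · simp [PTree.IsLeaf, singletonTree_hasNode, PTree.pathProb]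
    · intro σ hσ
      simp [PTree.IsLeaf, singletonTree_hasNode, hσ]
  rw [PTree.Regular, hone]
  exact tendsto_const_nhds

lemma epsReaches_self {E : Proc Chan → Proc Chan → Prop} {A : Proc Chan} {Φ : Proc Chan → Prop}
    (hA : E A A) (hΦ : Φ A) : EpsReaches E A Φ := by
  refine ⟨singletonTree A, isETree_singletonTree hA, regular_singletonTree A, ?_⟩
  intro σ L p hL _
  obtain ⟨_, rfl, _⟩ := singletonTree_node_eq_some.1 hL
  exact hΦ

/-- `A` retries until it becomes `B`: its only transitions are those of random choices between `A`
and `B`, one of which yields `B` with probability `p` and `A` again otherwise, and no silent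
transition of `B` leads to `A` or `B`. -/
structure IsRetryLoop (p : ℝ) (A B : Proc Chan) : Prop where
  prob_mem : p ∈ Set.Ioo 0 1
  cstep : CStep A.val 2 ![p, 1 - p] ![B.val, A.val]
  range_eq_of_cstep : ∀ {n : ℕ} {ps : Fin n → ℝ} {Ts : Fin n → Tm Chan},
    CStep A.val n ps Ts → Set.range Ts = {A.val, B.val}
  exists_lt_one_of_step : ∀ {l : Lab Chan} {T : Tm Chan}, Step A.val l T → ∃ q < 1, l = .tau q
  notMem_of_step : ∀ {q : ℝ} {X : Proc Chan},
    Step B.val (.tau q) X.val → X ∉ ({A, B} : Set (Proc Chan))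

/-- The tree of all retries of `A`. The spine `[]`, `[1]`, `[1, 1]`, … carries `A`, and the child
`0` of every spine node is a leaf carrying `B`. -/
def retryTree (p : ℝ) (A B : Proc Chan) : PTree Chan where
  node
    | [] => some (A, 1)
    | i :: σ =>
      if ∀ x ∈ σ, x = 1 then
        if i = 0 then some (B, p) else if i = 1 then some (A, 1 - p) else none
      else none

section RetryTree

variable {p : ℝ} {A B : Proc Chan}

lemma retryTree_node_cons {i : ℕ} {σ : List ℕ} {X : Proc Chan} {q : ℝ} :
    (retryTree p A B).node (i :: σ) = some (X, q) ↔
      (∀ x ∈ σ, x = 1) ∧ (i = 0 ∧ X = B ∧ q = p ∨ i = 1 ∧ X = A ∧ q = 1 - p) := by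
  by_cases hσ : ∀ x ∈ σ, x = 1
  · rcases i with _ | _ | i <;> simp [retryTree, eq_comm]
  · simp [retryTree, hσ]

lemma retryTree_hasNode_cons {i : ℕ} {σ : List ℕ} :
    (retryTree p A B).hasNode (i :: σ) ↔ (∀ x ∈ σ, x = 1) ∧ i < 2 := by
  have hi : i < 2 ↔ i = 0 ∨ i = 1 := by omega
  simp [PTree.hasNode_iff, retryTree_node_cons, hi, exists_or]

lemma exists_retryTree_node_spine {σ : List ℕ} (hσ : ∀ x ∈ σ, x = 1) :
    ∃ q, (retryTree p A B).node σ = some (A, q) := by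
  cases σ with
  | nil => exact ⟨1, rfl⟩
  | cons i σ =>
    rw [List.forall_mem_cons] at hσ
    exact ⟨1 - p, retryTree_node_cons.2 ⟨hσ.2, .inr ⟨hσ.1, rfl, rfl⟩⟩⟩

lemma eq_of_retryTree_node_parent {i : ℕ} {σ : List ℕ} {X : Proc Chan} {q : ℝ}
    (hX : (retryTree p A B).node σ = some (X, q)) (hi : (retryTree p A B).hasNode (i :: σ)) :
    X = A := by
  obtain ⟨q', hA⟩ := exists_retryTree_node_spine (p := p) (A := A) (B := B)
    (retryTree_hasNode_cons.1 hi).1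
  exact congrArg Prod.fst (Option.some.inj (hX.symm.trans hA))

lemma IsRetryLoop.isSilentTree_retryTree (h : IsRetryLoop p A B) :
    IsSilentTree A (retryTree p A B) := by
  obtain ⟨hp0, hp1⟩ := h.prob_mem
  refine ⟨rfl, ?_, ?_, ?_, ?_⟩
  · intro i σ hi
    obtain ⟨q, hq⟩ := exists_retryTree_node_spine (p := p) (A := A) (B := B)
      (retryTree_hasNode_cons.1 hi).1
    exact PTree.hasNode_iff.2 ⟨A, q, hq⟩
  · intro i j σ hji hi
    rw [retryTree_hasNode_cons] at hi ⊢
    exact ⟨hi.1, hji.trans_lt hi.2⟩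
  · exact fun σ => ⟨2, fun i hi hnode => hi.not_gt (retryTree_hasNode_cons.1 hnode).2⟩
  · intro σ i X _ X' _ hX hX'
    obtain rfl := eq_of_retryTree_node_parent hX (PTree.hasNode_iff.2 ⟨_, _, hX'⟩)
    rcases (retryTree_node_cons.1 hX').2 with ⟨_, rfl, rfl⟩ | ⟨_, rfl, rfl⟩
    · exact ⟨hp0, hp1.le, h.cstep.step 0⟩
    · exact ⟨sub_pos.2 hp1, sub_le_self 1 hp0.le, h.cstep.step 1⟩

lemma IsRetryLoop.isETree_retryTree (h : IsRetryLoop p A B) {E : Proc Chan → Proc Chan → Prop}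
    (hA : E A A) (hB : E A B) : IsETree E A (retryTree p A B) := by
  obtain ⟨hp0, hp1⟩ := h.prob_mem
  refine ⟨h.isSilentTree_retryTree, ?_, ?_, ?_⟩
  · rintro (_ | ⟨i, σ⟩) X q hX
    · obtain rfl : A = X := congrArg Prod.fst (Option.some.inj hX)
      exact hA
    · rcases (retryTree_node_cons.1 hX).2 with ⟨_, rfl, _⟩ | ⟨_, rfl, _⟩
      exacts [hB, hA]
  · intro σ i X _ X' _ hX hX' _
    obtain rfl := eq_of_retryTree_node_parent hX (PTree.hasNode_iff.2 ⟨_, _, hX'⟩)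
    have hσ := (retryTree_node_cons.1 hX').1
    refine ⟨2, _, _, h.cstep, fun j => ?_, Fin.forall_fin_two.2 ⟨⟨B, rfl, ?_⟩, ⟨X, rfl, ?_⟩⟩⟩
    · simp only [retryTree_hasNode_cons, and_iff_right hσ]
    · exact retryTree_node_cons.2 ⟨hσ, .inl ⟨rfl, rfl, rfl⟩⟩
    · exact retryTree_node_cons.2 ⟨hσ, .inr ⟨rfl, rfl, rfl⟩⟩
  · intro σ i X _ X' _ hX'
    rcases (retryTree_node_cons.1 hX').2 with ⟨_, _, hp⟩ | ⟨_, _, hp⟩ <;> linarith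

lemma retryTree_isLeaf_iff {σ : List ℕ} :
    (retryTree p A B).IsLeaf σ ↔ ∃ n, 0 :: List.replicate n 1 = σ := by
  constructor
  · rintro ⟨hnode, hleaf⟩
    cases σ with
    | nil => exact absurd (retryTree_hasNode_cons.2 ⟨by simp, by norm_num⟩) hleaf
    | cons i σ =>
      obtain ⟨hσ, hi⟩ := retryTree_hasNode_cons.1 hnode
      have hi1 : i ≠ 1 := fun hi1 =>
        hleaf (retryTree_hasNode_cons.2 ⟨List.forall_mem_cons.2 ⟨hi1, hσ⟩, by norm_num⟩)
      obtain rfl : i = 0 := by omega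
      exact ⟨σ.length, by rw [← List.eq_replicate_length.2 hσ]⟩
  · rintro ⟨n, rfl⟩
    refine ⟨retryTree_hasNode_cons.2 ⟨by simp, by norm_num⟩, fun h => ?_⟩
    exact absurd ((retryTree_hasNode_cons.1 h).1 0 (by simp)) zero_ne_one

lemma retryTree_pathProb_spine (n : ℕ) :
    (retryTree p A B).pathProb (List.replicate n 1) = (1 - p) ^ n := by
  induction n with
  | zero => rfl
  | succ n ih =>
    rw [List.replicate_succ, PTree.pathProb, ih, pow_succ',
      PTree.edgeProb_eq (retryTree_node_cons.2 ⟨by simp, .inr ⟨rfl, rfl, rfl⟩⟩)]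

lemma retryTree_pathProb_leaf (n : ℕ) :
    (retryTree p A B).pathProb (0 :: List.replicate n 1) = p * (1 - p) ^ n := by
  rw [PTree.pathProb, retryTree_pathProb_spine,
    PTree.edgeProb_eq (retryTree_node_cons.2 ⟨by simp, .inl ⟨rfl, rfl, rfl⟩⟩)]

lemma retryTree_finBranchProb (k : ℕ) :
    (retryTree p A B).finBranchProb k = 1 - (1 - p) ^ k := by
  rw [PTree.finBranchProb_eq_sum_range (fun _ => retryTree_isLeaf_iff) (by simp)]
  simp only [retryTree_pathProb_leaf, ← Finset.mul_sum]
  simpa using mul_neg_geom_sum (1 - p) k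

lemma regular_retryTree (hp : p ∈ Set.Ioo 0 1) : (retryTree p A B).Regular := by
  obtain ⟨hp0, hp1⟩ := hp
  rw [PTree.Regular, funext retryTree_finBranchProb]
  simpa using (tendsto_pow_atTop_nhds_zero_of_lt_one (r := 1 - p)
    (by linarith) (by linarith)).const_sub 1

end RetryTree

namespace IsRetryLoop

variable {p : ℝ} {A B : Proc Chan}

lemma epsReaches_left (h : IsRetryLoop p A B) {E : Proc Chan → Proc Chan → Prop}
    {Φ : Proc Chan → Prop} (hA : E A A) (hB : E A B) (hΦ : Φ B) : EpsReaches E A Φ := by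
  refine ⟨retryTree p A B, h.isETree_retryTree hA hB, regular_retryTree h.prob_mem, ?_⟩
  intro σ L q hL hleaf
  obtain ⟨n, rfl⟩ := retryTree_isLeaf_iff.1 ⟨PTree.hasNode_iff.2 ⟨L, q, hL⟩, hleaf⟩
  obtain ⟨_, ⟨_, rfl, _⟩ | ⟨hne, _⟩⟩ := retryTree_node_cons.1 hL
  · exact hΦ
  · exact absurd hne zero_ne_one

lemma epsReaches_iff (h : IsRetryLoop p A B) {X : Proc Chan} {Φ : Proc Chan → Prop}
    (hX : X ∈ ({A, B} : Set (Proc Chan))) (hΦ : ¬ Φ A) :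
    EpsReaches (pairClosure A B) X Φ ↔ Φ B := by
  constructor
  · intro hreach
    obtain ⟨L, hXL, hL⟩ := hreach.exists_rel
    have hmem : L ∈ ({A, B} : Set (Proc Chan)) := classOf_pairClosure hX ▸ hXL
    rcases hmem with rfl | rfl
    exacts [absurd hL hΦ, hL]
  · intro hB
    rcases hX with rfl | rfl
    · exact h.epsReaches_left (.refl _) (.rel _ _ ⟨rfl, rfl⟩) hB
    · exact epsReaches_self (.refl _) hB

lemma lTrans_iff (h : IsRetryLoop p A B) {X : Proc Chan} {l : Lab Chan} {C : Set (Proc Chan)}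
    (hX : X ∈ ({A, B} : Set (Proc Chan))) (hl : l.IsAct) :
    LTrans (pairClosure A B) X l C ↔ ∃ L' ∈ C, Step B.val l L'.val := by
  refine h.epsReaches_iff (Φ := fun L => ∃ L' ∈ C, Step L.val l L'.val) hX ?_
  rintro ⟨L', _, hstep⟩
  obtain ⟨q, hq, rfl⟩ := h.exists_lt_one_of_step hstep
  exact hq.ne hl

lemma collProb_eq_zero_of_disjoint (h : IsRetryLoop p A B) {C : Set (Proc Chan)}
    (hC : Disjoint C {A, B}) {n : ℕ} {ps : Fin n → ℝ} {Ts : Fin n → Tm Chan}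
    (hstep : CStep A.val n ps Ts) : collProb C ps Ts = 0 := by
  refine collProb_eq_zero ?_
  rintro i ⟨P, hPC, hP⟩
  have hPmem : P.val ∈ ({A.val, B.val} : Set (Tm Chan)) :=
    h.range_eq_of_cstep hstep ▸ ⟨i, hP.symm⟩
  exact Set.disjoint_left.1 hC hPC (hPmem.imp Subtype.ext Subtype.ext)

lemma qTrans_iff (h : IsRetryLoop p A B) {X : Proc Chan} {q : ℝ} {C : Set (Proc Chan)}
    (hX : X ∈ ({A, B} : Set (Proc Chan))) (hq : q ≠ 0) (hC : Disjoint C {A, B}) :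
    QTrans (pairClosure A B) X q C ↔
      ∃ (n : ℕ) (ps : Fin n → ℝ) (Ts : Fin n → Tm Chan), CStep B.val n ps Ts ∧
        collProb C ps Ts / (1 - collProb {A, B} ps Ts) = q := by
  rw [QTrans, classOf_pairClosure hX]
  refine h.epsReaches_iff (Φ := fun L => ∃ (n : ℕ) (ps : Fin n → ℝ) (Ts : Fin n → Tm Chan),
    CStep L.val n ps Ts ∧ collProb C ps Ts / (1 - collProb {A, B} ps Ts) = q) hX ?_
  rintro ⟨n, ps, Ts, hstep, hprob⟩
  rw [h.collProb_eq_zero_of_disjoint hC hstep, zero_div] at hprob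
  exact hq hprob.symm

lemma isBB_pairClosure (h : IsRetryLoop p A B) : IsBB (pairClosure A B) := by
  have hE : Equivalence (pairClosure A B) := Relation.EqvGen.is_equivalence _
  refine ⟨hE, ?_, ?_⟩
  · intro X Y l C hl _ hXY _ hX
    rcases pairClosure_iff.1 hXY with rfl | ⟨hXmem, hYmem⟩
    · exact hX
    · exact (h.lTrans_iff hYmem hl).2 ((h.lTrans_iff hXmem hl).1 hX)
  · intro X Y q C hq _ hC hXY hne hX
    rcases pairClosure_iff.1 hXY with rfl | ⟨hXmem, hYmem⟩
    · exact hX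
    · have hdisj : Disjoint C {A, B} := classOf_pairClosure hXmem ▸ hC.disjoint_classOf hE hne
      exact (h.qTrans_iff hYmem hq.ne' hdisj).2 ((h.qTrans_iff hXmem hq.ne' hdisj).1 hX)

lemma isLeaf_of_node_eq_right (h : IsRetryLoop p A B) {X : Proc Chan} {t : PTree Chan}
    (hX : X ∈ ({A, B} : Set (Proc Chan))) (ht : IsETree (pairClosure A B) X t) {σ : List ℕ}
    {q : ℝ} (hσ : t.node σ = some (B, q)) : t.IsLeaf σ := by
  obtain ⟨⟨_, _, _, _, hedge⟩, hE, _⟩ := ht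
  refine ⟨PTree.hasNode_iff.2 ⟨B, q, hσ⟩, fun hchild => ?_⟩
  obtain ⟨Y, r, hY⟩ := PTree.hasNode_iff.1 hchild
  have hstep : Step B.val (.tau r) Y.val := (hedge σ 0 B q Y r hσ hY).2.2
  exact h.notMem_of_step hstep (classOf_pairClosure hX ▸ hE _ Y r hY)

lemma exists_child_eq_right (h : IsRetryLoop p A B) {E : Proc Chan → Proc Chan → Prop}
    {X : Proc Chan} {t : PTree Chan} (ht : IsETree E X t) {σ : List ℕ} {q : ℝ}
    (hσ : t.node σ = some (A, q)) (hchild : t.hasNode (0 :: σ)) :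
    ∃ i r, t.node (i :: σ) = some (B, r) := by
  obtain ⟨⟨_, _, _, _, hedge⟩, _, hrand, _⟩ := ht
  obtain ⟨Y, r, hY⟩ := PTree.hasNode_iff.1 hchild
  obtain ⟨r', hr', hlab⟩ := h.exists_lt_one_of_step (hedge σ 0 A q Y r hσ hY).2.2
  obtain rfl : r = r' := Lab.tau.inj hlab
  obtain ⟨n, ps, Ts, hstep, _, hchildren⟩ := hrand σ 0 A q Y r hσ hY hr'
  obtain ⟨i, hi⟩ : B.val ∈ Set.range Ts := h.range_eq_of_cstep hstep ▸ .inr rfl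
  obtain ⟨Z, hZ, hnode⟩ := hchildren i
  obtain rfl : Z = B := Subtype.ext (hZ.trans hi)
  exact ⟨i, ps i, hnode⟩

lemma not_divergent (h : IsRetryLoop p A B) {X : Proc Chan} {t : PTree Chan}
    (hX : X ∈ ({A, B} : Set (Proc Chan))) (ht : IsETree (pairClosure A B) X t) :
    ¬ t.Divergent := by
  suffices hleaf : ∃ σ, t.IsLeaf σ from
    hleaf.elim fun σ hσ => PTree.not_divergent_of_isLeaf ht.1 hσ
  have hroot : t.node [] = some (X, 1) := ht.1.1
  rcases id hX with rfl | rfl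
  · by_cases hchild : t.hasNode [0]
    · obtain ⟨i, r, hi⟩ := h.exists_child_eq_right ht hroot hchild
      exact ⟨_, h.isLeaf_of_node_eq_right hX ht hi⟩
    · exact ⟨[], PTree.hasNode_iff.2 ⟨_, _, hroot⟩, hchild⟩
  · exact ⟨[], h.isLeaf_of_node_eq_right hX ht hroot⟩

lemma codivergent_pairClosure (h : IsRetryLoop p A B) : Codivergent (pairClosure A B) := by
  intro X Y hXY
  rcases pairClosure_iff.1 hXY with rfl | ⟨hX, hY⟩
  · rfl
  · exact iff_of_false (fun ⟨_, ht, hdiv⟩ => h.not_divergent hX ht hdiv)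
      (fun ⟨_, ht, hdiv⟩ => h.not_divergent hY ht hdiv)

end IsRetryLoop

namespace Tm

lemma inst_nil (k : ℕ) (S : Tm Chan) : inst k S nil = nil := by
  rw [nil, inst]
  congr 1
  exact funext nofun

lemma inst_sum2 (k : ℕ) (S : Tm Chan) (g₁ g₂ : Chan ⊕ Chan) (T₁ T₂ : Tm Chan) :
    inst k S (sum2 g₁ g₂ T₁ T₂) = sum2 g₁ g₂ (inst k S T₁) (inst k S T₂) := by
  rw [sum2, inst, sum2]
  congr 1
  exact funext (Fin.forall_fin_two.2 ⟨rfl, rfl⟩)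

lemma inst_rand2 (k : ℕ) (S : Tm Chan) (p q : ℝ) (T₁ T₂ : Tm Chan) :
    inst k S (rand2 p q T₁ T₂) = rand2 p q (inst k S T₁) (inst k S T₂) := by
  rw [rand2, inst, rand2]
  congr 1
  exact funext (Fin.forall_fin_two.2 ⟨rfl, rfl⟩)

lemma inst_plusTau (k : ℕ) (S : Tm Chan) (a c : Chan) (T' T : Tm Chan) :
    inst k S (plusTau a c T' T) = plusTau a c (inst k S T') (inst k S T) := by
  simp only [plusTau, coNil, pfx, inst, inst_nil, inst_sum2]

end Tm

lemma isRetryLoop_of_unfold {p : ℝ} {A B : Proc Chan} {T : Tm Chan} (hp : p ∈ Set.Ioo 0 1)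
    (hA : A.val = .fix T) (hT : Tm.inst 0 (.fix T) T = rand2 p (1 - p) B.val A.val)
    (hB : ∀ {q : ℝ} {X : Proc Chan},
      Step B.val (.tau q) X.val → X ∉ ({A, B} : Set (Proc Chan))) : IsRetryLoop p A B where
  prob_mem := hp
  cstep := by
    rw [hA, cstep_fix_iff, hT, ← hA]
    exact .rand
  range_eq_of_cstep {n ps Ts} h := by
    rw [hA, cstep_fix_iff, hT] at h
    cases h
    simp
  exists_lt_one_of_step {l U} h := by
    rw [hA, step_fix_iff, hT] at h
    cases h with
    | rand i =>
      refine ⟨_, ?_, rfl⟩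
      revert i
      exact Fin.forall_fin_two.2 ⟨hp.2, sub_lt_self 1 hp.1⟩
  notMem_of_step := hB

lemma exists_eq_loc_par_nil_of_step_plusTau {a c : Chan} {T' T U : Tm Chan} {q : ℝ}
    (h : Step (plusTau a c T' T) (.tau q) U) : ∃ S, U = .loc c (.par Tm.nil S) := by
  rw [plusTau] at h
  cases h with
  | loc _ h _ _ =>
    cases h with
    | comL hco _ => cases hco
    | comR hco _ => cases hco; exact ⟨_, rfl⟩
    | parL hco => exact absurd hco not_step_tau_sum
    | parR hsum => exact absurd hsum not_step_tau_sum

lemma inst_Gtm_body (a c : Chan) :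
    Tm.inst 0 (Gtm a c) (rand2 (1/3) (2/3) (plusTau a c Tm.nil (.var 0)) (.var 0)) =
      rand2 (1/3) (1 - 1/3) (GaTm a c) (Gtm a c) := by
  have hvar : Tm.inst 0 (Gtm a c) (.var 0) = Gtm a c := by simp [Tm.inst]
  rw [Tm.inst_rand2, Tm.inst_plusTau, Tm.inst_nil, hvar, GaTm]
  norm_num

lemma isRetryLoop_GP (a c : Chan) : IsRetryLoop (1/3) (GP a c) (GaP a c) := by
  refine isRetryLoop_of_unfold (by norm_num) rfl (inst_Gtm_body a c) ?_
  intro q X hstep hX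
  obtain ⟨S, hS⟩ := exists_eq_loc_par_nil_of_step_plusTau hstep
  rcases hX with rfl | rfl
  · simp [GP, Gtm] at hS
  · simp [GaP, GaTm, plusTau, coNil, pfx, Tm.nil] at hS

theorem G_eq_Ga_general {p : ℝ} {A B : Proc Chan} (h : IsRetryLoop p A B) :
    IsCBB (pairClosure A B) ∧ RccsEq A B := by
  have hcbb : IsCBB (pairClosure A B) := ⟨h.isBB_pairClosure, h.codivergent_pairClosure⟩
  exact ⟨hcbb, pairClosure A B, hcbb, .rel _ _ ⟨rfl, rfl⟩⟩

/-- For a fresh channel `c ≠ a`, the equivalence closure of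
the single pair `{(G, G_a)}`, where `G = μX.(⅓τ.(a.0 + τ.X) ⊕ ⅔τ.X)` and
`G_a = a.0 + τ.G`, is a codivergent branching bisimulation on `P_RCCS`; in
particular `G =_RCCS a.0 + τ.G`. -/
theorem G_eq_Ga {Chan : Type} (a c : Chan) (hfresh : c ≠ a) :
    IsCBB (Relation.EqvGen fun x y : Proc Chan => x = GP a c ∧ y = GaP a c) ∧
    RccsEq (GP a c) (GaP a c) := by
  exact G_eq_Ga_general (isRetryLoop_GP a c)
end
end

section
/- For every k ≥ 2 and pairwise distinct channels a_1, …, a_k, define the open terms C_k = ½τ.a_k.0 ⊕ ½τ.X and C_j = ½τ.a_j.0 ⊕ ½τ.C_{j+1} for 1 ≤ j < k, let R = μX.C_1, and let the ring nodes be N_j = C_j{R/X} for 1 ≤ j ≤ k. Then for all i ≠ j in {1, …, k}, no branching bisimulation on P_RCCS relates N_i and N_j. -/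
/-!
Formalization of RCCS (Randomized CCS) following the paper
"A Uniform Framework for Probabilistic Process Models".
Channels form a type `Chan`; terms use de Bruijn indices for process variables.
-/

noncomputable section
open scoped Classical

variable {Chan : Type}

/-- The open term `C_j` of the probabilistic ring (1-based indices, given
with fuel `m = k - j`): `C_k = ½τ.a_k.0 ⊕ ½τ.X` and
`C_j = ½τ.a_j.0 ⊕ ½τ.C_{j+1}` for `j < k`. -/
def Cterm (a : ℕ → Chan) : ℕ → ℕ → Tm Chan
  | 0, j => rand2 (1/2) (1/2) (aNil (a j)) (.var 0)
  | m + 1, j => rand2 (1/2) (1/2) (aNil (a j)) (Cterm a m (j + 1))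

/-- `R = μX.C_1`. -/
def Rterm (a : ℕ → Chan) (k : ℕ) : Tm Chan := .fix (Cterm a (k - 1) 1)

/-- The ring node `N_j = C_j{R/X}`. -/
def Nterm (a : ℕ → Chan) (k j : ℕ) : Tm Chan := Tm.inst 0 (Rterm a k) (Cterm a (k - j) j)

lemma Cterm_closed (a : ℕ → Chan) : ∀ m j, (Cterm a m j).ClosedAt 1 := by
  intro m
  induction m with
  | zero => intro j; simp [Cterm, rand2, aNil, pfx, Tm.nil, Tm.ClosedAt, Fin.forall_fin_two]
  | succ m ih =>
      intro j
      simp only [Cterm, rand2, Tm.ClosedAt, Fin.forall_fin_two]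
      refine ⟨?_, ?_⟩
      · simp [aNil, pfx, Tm.nil, Tm.ClosedAt]
      · simpa using ih (j + 1)

lemma Cterm_wf (a : ℕ → Chan) : ∀ m j, (Cterm a m j).WF := by
  intro m
  induction m with
  | zero =>
      intro j
      simp [Cterm, rand2, aNil, pfx, Tm.nil, Tm.WF, Fin.forall_fin_two, Fin.sum_univ_two]
      norm_num
  | succ m ih =>
      intro j
      simp only [Cterm, rand2, Tm.WF, Fin.forall_fin_two]
      refine ⟨by norm_num, ?_, ?_, ?_, ?_⟩
      · simp [Fin.forall_fin_two]; norm_num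
      · simp [Fin.sum_univ_two]; norm_num
      · simp [aNil, pfx, Tm.nil, Tm.WF]
      · simpa using ih (j + 1)

lemma Rterm_spec (a : ℕ → Chan) (k : ℕ) : (Rterm a k).ClosedAt 0 ∧ (Rterm a k).WF := by
  refine ⟨?_, ?_, ?_⟩
  · simpa [Rterm, Tm.ClosedAt] using Cterm_closed a (k - 1) 1
  · cases h : (k - 1) <;> simp [Cterm, rand2, Tm.Guarded]
  · exact Cterm_wf a (k - 1) 1

lemma Nterm_aux (a : ℕ → Chan) (k : ℕ) :
    ∀ m j, (Tm.inst 0 (Rterm a k) (Cterm a m j)).ClosedAt 0 ∧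
      (Tm.inst 0 (Rterm a k) (Cterm a m j)).WF := by
  intro m
  induction m with
  | zero =>
      intro j
      constructor
      · simp only [Cterm, rand2, Tm.inst, Tm.ClosedAt, Fin.forall_fin_two]
        refine ⟨?_, ?_⟩
        · simp [aNil, pfx, Tm.nil, Tm.inst, Tm.ClosedAt]
        · simpa [Tm.inst] using (Rterm_spec a k).1
      · simp only [Cterm, rand2, Tm.inst, Tm.WF, Fin.forall_fin_two]
        refine ⟨by norm_num, ?_, ?_, ?_, ?_⟩
        · simp [Fin.forall_fin_two]; norm_num
        · simp [Fin.sum_univ_two]; norm_num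
        · simp [aNil, pfx, Tm.nil, Tm.inst, Tm.WF]
        · simpa [Tm.inst] using (Rterm_spec a k).2
  | succ m ih =>
      intro j
      constructor
      · simp only [Cterm, rand2, Tm.inst, Tm.ClosedAt, Fin.forall_fin_two]
        refine ⟨?_, ?_⟩
        · simp [aNil, pfx, Tm.nil, Tm.inst, Tm.ClosedAt]
        · simpa using (ih (j + 1)).1
      · simp only [Cterm, rand2, Tm.inst, Tm.WF, Fin.forall_fin_two]
        refine ⟨by norm_num, ?_, ?_, ?_, ?_⟩
        · simp [Fin.forall_fin_two]; norm_num
        · simp [Fin.sum_univ_two]; norm_num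
        · simp [aNil, pfx, Tm.nil, Tm.inst, Tm.WF]
        · simpa using (ih (j + 1)).2

lemma Nterm_spec (a : ℕ → Chan) (k j : ℕ) : (Nterm a k j).ClosedAt 0 ∧ (Nterm a k j).WF :=
  Nterm_aux a k (k - j) j

/-- The ring node `N_j` as a process. -/
def NtermP (a : ℕ → Chan) (k j : ℕ) : Proc Chan := ⟨Nterm a k j, Nterm_spec a k j⟩

/-!
An action of `a_m.0` must be matched from its whole class, and a random choice can match it only
if all its branches stay in that class. So a ring node equivalent to `a_m.0` would push
equivalence with `a_m.0` around the entire ring and force all channels to coincide. Hence the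
classes of `a_i.0` and `a_j.0` contain no ring node, and the `q`-transition of `N_i` into the
class of `a_i.0` cannot be matched by `N_j`: none of its branches lies in that class, and its
branch `a_j.0` leaves the class of `N_j`.
-/

section Transitions

/-- One unfolding of an outermost fixpoint, leaving all other terms unchanged. It lets `μX.T` and
`T{μX.T/X}` be treated as the same state. -/
def Tm.unfold : Tm Chan → Tm Chan
  | .fix T => .inst 0 (.fix T) T
  | T => T

lemma Step.unfold {T T' : Tm Chan} {l : Lab Chan} (h : Step T l T') : Step T.unfold l T' := by
  cases T with
  | fix T => cases h; assumption
  | _ => exact h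

lemma CStep.unfold {T : Tm Chan} {n : ℕ} {p : Fin n → ℝ} {T' : Fin n → Tm Chan}
    (h : CStep T n p T') : CStep T.unfold n p T' := by
  cases T with
  | fix T => cases h; assumption
  | _ => exact h

lemma CStep.of_unfold {T : Tm Chan} {n : ℕ} {p : Fin n → ℝ} {T' : Fin n → Tm Chan}
    (h : CStep T.unfold n p T') : CStep T n p T' := by
  cases T with
  | fix T => exact .fix h
  | _ => exact h

lemma eq_name_of_step_aNil {c : Chan} {l : Lab Chan} {T : Tm Chan} (h : Step (aNil c) l T) :
    l = .name c := by
  unfold aNil pfx at h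
  cases h
  rfl

/-- The process `P` is the random choice `⊕ p_i τ.B_i`, up to unfolding an outermost fixpoint.
Well-formedness of the unfolding makes `p` a probability distribution with values in `(0,1)`. -/
structure IsRandomChoice (P : Proc Chan) {n : ℕ} (p : Fin n → ℝ) (B : Fin n → Proc Chan) :
    Prop where
  unfold_eq : P.val.unfold = .rand n p fun i => (B i).val
  wf : P.val.unfold.WF

namespace IsRandomChoice

variable {P : Proc Chan} {n : ℕ} {p : Fin n → ℝ} {B : Fin n → Proc Chan}

lemma prob_pos (h : IsRandomChoice P p B) (i : Fin n) : 0 < p i :=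
  ((h.unfold_eq ▸ h.wf : (Tm.rand n p _).WF).2.1 i).1

lemma prob_lt_one (h : IsRandomChoice P p B) (i : Fin n) : p i < 1 :=
  ((h.unfold_eq ▸ h.wf : (Tm.rand n p _).WF).2.1 i).2

lemma sum_prob (h : IsRandomChoice P p B) : ∑ i, p i = 1 :=
  (h.unfold_eq ▸ h.wf : (Tm.rand n p _).WF).2.2.1

lemma exists_label_eq_tau (h : IsRandomChoice P p B) {l : Lab Chan} {T : Tm Chan}
    (hs : Step P.val l T) : ∃ i, l = .tau (p i) := by
  have hs' := hs.unfold
  rw [h.unfold_eq] at hs'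
  cases hs' with
  | rand i => exact ⟨i, rfl⟩

lemma cstep (h : IsRandomChoice P p B) : CStep P.val n p fun i => (B i).val :=
  .of_unfold (h.unfold_eq ▸ .rand)

lemma sigma_eq_of_cstep (h : IsRandomChoice P p B) {m : ℕ} {q : Fin m → ℝ} {T : Fin m → Tm Chan}
    (hs : CStep P.val m q T) :
    (⟨m, q, T⟩ : Σ m : ℕ, (Fin m → ℝ) × (Fin m → Tm Chan)) = ⟨n, p, fun i => (B i).val⟩ := by
  have hs' := hs.unfold
  rw [h.unfold_eq] at hs'
  cases hs'
  rfl

end IsRandomChoice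

end Transitions

section CollectiveProbability

variable {C D : Set (Proc Chan)} {n : ℕ} {p : Fin n → ℝ} {B : Fin n → Proc Chan}

lemma inC_val {P : Proc Chan} : inC C P.val ↔ P ∈ C :=
  ⟨fun ⟨_, hQ, hQP⟩ => Subtype.ext hQP ▸ hQ, fun h => ⟨P, h, rfl⟩⟩

lemma collProb_val (C : Set (Proc Chan)) (p : Fin n → ℝ) (B : Fin n → Proc Chan) :
    collProb C p (fun i => (B i).val) = ∑ i, if B i ∈ C then p i else 0 := by
  simp only [collProb, inC_val]

lemma collProb_pos (hp : ∀ i, 0 < p i) {i : Fin n} (hi : B i ∈ C) :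
    0 < collProb C p fun i => (B i).val := by
  rw [collProb_val]
  refine Finset.sum_pos' (fun j _ => ?_) ⟨i, Finset.mem_univ i, by simpa [hi] using hp i⟩
  split_ifs
  exacts [(hp j).le, le_rfl]

lemma collProb_add_le_sum (hp : ∀ i, 0 ≤ p i) (hCD : Disjoint C D) :
    (collProb C p fun i => (B i).val) + (collProb D p fun i => (B i).val) ≤ ∑ i, p i := by
  rw [collProb_val, collProb_val, ← Finset.sum_add_distrib]
  refine Finset.sum_le_sum fun i _ => ?_
  have hi : B i ∈ C → B i ∉ D := fun h => hCD.notMem_of_mem_left h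
  have := hp i
  split_ifs <;> simp_all

lemma collProb_eq_zero_s14 (h : ∀ i, B i ∉ C) : (collProb C p fun i => (B i).val) = 0 := by
  simp [collProb_val, h]

end CollectiveProbability

section SilentTrees

variable {E : Proc Chan → Proc Chan → Prop} {A : Proc Chan} {t : PTree Chan} {l : Lab Chan}
  {C : Set (Proc Chan)} {n : ℕ} {p : Fin n → ℝ} {B : Fin n → Proc Chan}

/-- The silent tree consisting of the root `A` alone. -/
def PTree.singleton (A : Proc Chan) : PTree Chan :=
  ⟨fun σ => if σ = [] then some (A, 1) else none⟩

lemma PTree.singleton_node_eq_some {σ : List ℕ} {x : Proc Chan × ℝ} :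
    (PTree.singleton A).node σ = some x ↔ σ = [] ∧ x = (A, 1) := by
  by_cases h : σ = [] <;> simp [singleton, h, eq_comm]

lemma PTree.singleton_hasNode {σ : List ℕ} : (PTree.singleton A).hasNode σ ↔ σ = [] := by
  by_cases h : σ = [] <;> simp [singleton, hasNode, h]

lemma PTree.singleton_isETree (hA : E A A) : IsETree E A (PTree.singleton A) := by
  refine ⟨⟨?_, ?_, ?_, ?_, ?_⟩, ?_, ?_, ?_⟩ <;>
    simp +contextual [singleton_node_eq_some, singleton_hasNode, hA]

lemma PTree.singleton_regular (A : Proc Chan) : (PTree.singleton A).Regular := by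
  have hprob (k : ℕ) : (PTree.singleton A).finBranchProb k = 1 := by
    rw [finBranchProb, tsum_eq_single []]
    · simp [IsLeaf, singleton_hasNode, pathProb]
    · intro σ hσ
      simp [IsLeaf, singleton_hasNode, hσ]
  exact tendsto_const_nhds.congr fun k => (hprob k).symm

lemma LTrans.of_step (hA : E A A) {A' : Proc Chan} (hA' : A' ∈ C) (h : Step A.val l A'.val) :
    LTrans E A l C := by
  refine ⟨.singleton A, PTree.singleton_isETree hA, PTree.singleton_regular A, fun σ L p hL _ => ?_⟩
  cases (PTree.singleton_node_eq_some.mp hL).2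
  exact ⟨A', hA', h⟩

lemma QTrans.of_cstep (hA : E A A) {T : Fin n → Tm Chan} (h : CStep A.val n p T) :
    QTrans E A (collProb C p T / (1 - collProb (classOf E A) p T)) C := by
  refine ⟨.singleton A, PTree.singleton_isETree hA, PTree.singleton_regular A, fun σ L r hL _ => ?_⟩
  cases (PTree.singleton_node_eq_some.mp hL).2
  exact ⟨n, p, T, h, rfl⟩

lemma IsETree.exists_tau_step (ht : IsETree E A t) (h : t.hasNode [0]) :
    ∃ (r : ℝ) (A' : Proc Chan), t.node [0] = some (A', r) ∧ Step A.val (.tau r) A'.val := by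
  obtain ⟨⟨A', r⟩, hA'⟩ := Option.isSome_iff_exists.mp h
  obtain ⟨hroot, -, -, -, hedge⟩ := ht.1
  exact ⟨r, A', hA', (hedge [] 0 A 1 A' r hroot hA').2.2⟩

lemma IsETree.branches_mem_class (ht : IsETree E A t) (hA : IsRandomChoice A p B)
    (h : t.hasNode [0]) (i : Fin n) : E A (B i) := by
  obtain ⟨r, A', hA', hs⟩ := ht.exists_tau_step h
  obtain ⟨⟨hroot, -⟩, hclass, hrand, -⟩ := ht
  obtain ⟨j, hj⟩ := hA.exists_label_eq_tau hs
  have hr : r < 1 := by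
    cases hj
    exact hA.prob_lt_one j
  obtain ⟨m, q, T, hc, -, hchild⟩ := hrand [] 0 A 1 A' r hroot hA' hr
  cases hA.sigma_eq_of_cstep hc
  obtain ⟨B', hB', hnode⟩ := hchild i
  cases Subtype.ext hB'
  exact hclass _ _ _ hnode

lemma LTrans.exists_step (h : LTrans E A l C) (hA : ∀ r T, ¬ Step A.val (.tau r) T) :
    ∃ A' ∈ C, Step A.val l A'.val := by
  obtain ⟨t, ht, -, hleaf⟩ := h
  refine hleaf [] A 1 ht.1.1 fun hchild => ?_
  obtain ⟨r, A', -, hs⟩ := ht.exists_tau_step hchild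
  exact hA r A'.val hs

lemma LTrans.branches_mem_class (h : LTrans E A l C) (hl : ∀ r, l ≠ .tau r)
    (hA : IsRandomChoice A p B) (i : Fin n) : E A (B i) := by
  obtain ⟨t, ht, -, hleaf⟩ := h
  refine ht.branches_mem_class hA ?_ i
  by_contra hroot
  obtain ⟨A', -, hs⟩ := hleaf [] A 1 ht.1.1 hroot
  obtain ⟨j, hj⟩ := hA.exists_label_eq_tau hs
  exact hl _ hj

lemma QTrans.branches_mem_class_or_eq {q : ℝ} (h : QTrans E A q C) (hA : IsRandomChoice A p B) :
    (∀ i, E A (B i)) ∨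
      (collProb C p fun i => (B i).val) /
        (1 - collProb (classOf E A) p fun i => (B i).val) = q := by
  obtain ⟨t, ht, -, hleaf⟩ := h
  by_cases hroot : t.hasNode [0]
  · exact .inl (ht.branches_mem_class hA hroot)
  · obtain ⟨m, r, T, hc, hq⟩ := hleaf [] A 1 ht.1.1 hroot
    cases hA.sigma_eq_of_cstep hc
    exact .inr hq

end SilentTrees

section Bisimulation

variable {E : Proc Chan → Proc Chan → Prop}

lemma IsClass.disjoint (hE : Equivalence E) {C D : Set (Proc Chan)} (hC : IsClass E C)
    (hD : IsClass E D) (hne : C ≠ D) : Disjoint C D := by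
  obtain ⟨A, rfl⟩ := hC
  obtain ⟨B, rfl⟩ := hD
  refine Set.disjoint_left.mpr fun P (hAP : E A P) (hBP : E B P) => hne ?_
  have hAB : E A B := hE.trans hAP (hE.symm hBP)
  exact Set.ext fun Q => ⟨hE.trans (hE.symm hAB), hE.trans hAB⟩

namespace IsBB

lemma branches_mem_class_or_exists_branch_mem (hE : IsBB E) {P Q : Proc Chan} (hPQ : E P Q)
    {m n : ℕ} {p : Fin m → ℝ} {B : Fin m → Proc Chan} (hP : IsRandomChoice P p B)
    {q : Fin n → ℝ} {D : Fin n → Proc Chan} (hQ : IsRandomChoice Q q D)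
    {C : Set (Proc Chan)} (hC : IsClass E C) (hne : C ≠ classOf E P) {i : Fin m}
    (hi : B i ∈ C) : (∀ j, E Q (D j)) ∨ ∃ j, D j ∈ C := by
  set x := collProb C p fun i => (B i).val
  set y := collProb (classOf E P) p fun i => (B i).val
  have hx : 0 < x := collProb_pos hP.prob_pos hi
  have hxy : x + y ≤ 1 :=
    hP.sum_prob ▸ collProb_add_le_sum (fun i => (hP.prob_pos i).le)
      (hC.disjoint hE.1 ⟨P, rfl⟩ hne)
  have hy : 0 < 1 - y := by linarith
  have hw : 0 < x / (1 - y) := div_pos hx hy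
  have hw_le : x / (1 - y) ≤ 1 := (div_le_one hy).mpr (by linarith)
  have hQC : QTrans E Q (x / (1 - y)) C :=
    hE.2.2 P Q _ C hw hw_le hC hPQ hne (.of_cstep (hE.1.refl P) hP.cstep)
  refine (hQC.branches_mem_class_or_eq hQ).imp_right fun hweight => ?_
  by_contra! hD
  rw [collProb_eq_zero_s14 hD, zero_div] at hweight
  exact hw.ne hweight

lemma exists_lTrans_name (hE : IsBB E) {c : Chan} {P : Proc Chan} (h : E (aNilP c) P) :
    ∃ C, LTrans E P (.name c) C := by
  let nilP : Proc Chan := ⟨.nil, by simp [Tm.nil, Tm.ClosedAt, Tm.WF]⟩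
  have hstep : Step (aNilP c).val (.name c) nilP.val :=
    Step.sum (α := fun _ => Sum.inl c) (T := fun _ => Tm.nil) (0 : Fin 1)
  exact ⟨classOf E nilP, hE.2.1 _ _ _ _ trivial ⟨nilP, rfl⟩ h (.inl nofun)
    (.of_step (hE.1.refl _) (hE.1.refl nilP) hstep)⟩

lemma aNilP_inj (hE : IsBB E) {c d : Chan} (h : E (aNilP c) (aNilP d)) : c = d := by
  obtain ⟨C, hC⟩ := hE.exists_lTrans_name h
  obtain ⟨P, -, hs⟩ := hC.exists_step fun r T hs => nomatch eq_name_of_step_aNil hs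
  exact Lab.name.inj (eq_name_of_step_aNil hs)

lemma aNilP_equiv_branch (hE : IsBB E) {c : Chan} {P : Proc Chan} (h : E (aNilP c) P)
    {n : ℕ} {p : Fin n → ℝ} {B : Fin n → Proc Chan} (hP : IsRandomChoice P p B) (i : Fin n) :
    E (aNilP c) (B i) := by
  obtain ⟨C, hC⟩ := hE.exists_lTrans_name h
  exact hE.1.trans h (hC.branches_mem_class nofun hP i)

end IsBB

end Bisimulation

section Ring

variable {a : ℕ → Chan} {k l m : ℕ} {P : Proc Chan}

/-- `P` is a state of the ring at position `l`: besides the node `N_l` itself, this makes `R`,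
the successor of `N_k`, a state at position `1`. -/
def IsRingState (a : ℕ → Chan) (k l : ℕ) (P : Proc Chan) : Prop :=
  P.val.unfold = Nterm a k l

lemma rand2_inst (p q : ℝ) (R S T : Tm Chan) :
    Tm.inst 0 R (rand2 p q S T) = rand2 p q (Tm.inst 0 R S) (Tm.inst 0 R T) := by
  simp only [rand2, Tm.inst, Tm.rand.injEq, heq_eq_eq, true_and]
  ext i
  fin_cases i <;> rfl

lemma aNil_inst (R : Tm Chan) (c : Chan) : Tm.inst 0 R (aNil c) = aNil c := by
  simp only [aNil, pfx, Tm.nil, Tm.inst]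
  congr! 3

lemma Nterm_of_lt (h : l < k) :
    Nterm a k l = rand2 (1 / 2) (1 / 2) (aNil (a l)) (Nterm a k (l + 1)) := by
  obtain ⟨m, hm⟩ : ∃ m, k - l = m + 1 := ⟨k - l - 1, by omega⟩
  have hm' : k - (l + 1) = m := by omega
  rw [Nterm, Nterm, hm, hm', Cterm, rand2_inst, aNil_inst]

lemma Nterm_of_le (h : k ≤ l) :
    Nterm a k l = rand2 (1 / 2) (1 / 2) (aNil (a l)) (Rterm a k) := by
  rw [Nterm, Nat.sub_eq_zero_of_le h, Cterm, rand2_inst, aNil_inst]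
  simp [Tm.inst]

lemma isRingState_NtermP (a : ℕ → Chan) (k l : ℕ) : IsRingState a k l (NtermP a k l) := by
  change (Nterm a k l).unfold = Nterm a k l
  rcases lt_or_ge l k with h | h
  · rw [Nterm_of_lt h]; rfl
  · rw [Nterm_of_le h]; rfl

namespace IsRingState

lemma isRandomChoice (hP : IsRingState a k l P) {S : Proc Chan}
    (hS : Nterm a k l = rand2 (1 / 2) (1 / 2) (aNil (a l)) S.val) :
    IsRandomChoice P ![1 / 2, 1 / 2] ![aNilP (a l), S] := by
  refine ⟨?_, hP ▸ (Nterm_spec a k l).2⟩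
  rw [hP, hS, rand2]
  congr 1
  ext i
  fin_cases i <;> rfl

lemma exists_next (hP : IsRingState a k l P) :
    ∃ S, IsRingState a k (if l < k then l + 1 else 1) S ∧
      IsRandomChoice P ![1 / 2, 1 / 2] ![aNilP (a l), S] := by
  split_ifs with h
  · exact ⟨NtermP a k (l + 1), isRingState_NtermP a k (l + 1), hP.isRandomChoice (Nterm_of_lt h)⟩
  · exact ⟨⟨Rterm a k, Rterm_spec a k⟩, rfl, hP.isRandomChoice (Nterm_of_le (not_lt.mp h))⟩

variable {E : Proc Chan → Proc Chan → Prop} {c : Chan}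

lemma exists_next_equiv_aNilP (hE : IsBB E) (hP : IsRingState a k l P) (h : E (aNilP c) P) :
    ∃ S, IsRingState a k (if l < k then l + 1 else 1) S ∧ E (aNilP c) S := by
  obtain ⟨S, hS, hPS⟩ := hP.exists_next
  exact ⟨S, hS, hE.aNilP_equiv_branch h hPS 1⟩

lemma exists_equiv_aNilP_of_le (hE : IsBB E) (hP : IsRingState a k l P) (h : E (aNilP c) P)
    (hlm : l ≤ m) (hmk : m ≤ k) : ∃ S, IsRingState a k m S ∧ E (aNilP c) S := by
  induction m, hlm using Nat.le_induction with
  | base => exact ⟨P, hP, h⟩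
  | succ m _ ih =>
    obtain ⟨S, hS, hcS⟩ := ih (by omega)
    simpa [Nat.lt_of_succ_le hmk] using hS.exists_next_equiv_aNilP hE hcS

lemma channel_eq_of_equiv_aNilP (hE : IsBB E) (hP : IsRingState a k l P) (h : E (aNilP c) P)
    (hlk : l ≤ k) (hm : 1 ≤ m) (hmk : m ≤ k) : c = a m := by
  obtain ⟨S, hS, hcS⟩ := hP.exists_equiv_aNilP_of_le hE h hlk le_rfl
  obtain ⟨R, hR, hcR⟩ := hS.exists_next_equiv_aNilP hE hcS
  rw [if_neg (lt_irrefl k)] at hR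
  obtain ⟨Q, hQ, hcQ⟩ := hR.exists_equiv_aNilP_of_le hE hcR hm hmk
  obtain ⟨_, _, hchoice⟩ := hQ.exists_next
  exact hE.aNilP_inj (hE.aNilP_equiv_branch hcQ hchoice 0)

end IsRingState

end Ring

theorem ring_nodes_not_bisimilar_general (k : ℕ) (a : ℕ → Chan) (i j : ℕ)
    (hi : 1 ≤ i) (hik : i ≤ k) (hj : 1 ≤ j) (hjk : j ≤ k) (hij : a i ≠ a j)
    (E : Proc Chan → Proc Chan → Prop) (hE : IsBB E) :
    ¬ E (NtermP a k i) (NtermP a k j) := by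
  intro hNN
  have hNi := isRingState_NtermP a k i
  have hNj := isRingState_NtermP a k j
  obtain ⟨Si, -, hchoice_i⟩ := hNi.exists_next
  obtain ⟨Sj, hSj, hchoice_j⟩ := hNj.exists_next
  have hclass_ne : classOf E (aNilP (a i)) ≠ classOf E (NtermP a k i) := fun heq =>
    hij (hNi.channel_eq_of_equiv_aNilP hE (heq ▸ hE.1.refl _ : _ ∈ classOf E _) hik hj hjk)
  rcases hE.branches_mem_class_or_exists_branch_mem hNN hchoice_i hchoice_j ⟨_, rfl⟩ hclass_ne
    (i := 0) (hE.1.refl _) with hinert | ⟨b, hb⟩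
  · exact hij (hNj.channel_eq_of_equiv_aNilP hE (hE.1.symm (hinert 0)) hjk hi hik).symm
  · fin_cases b
    · exact hij (hE.aNilP_inj hb)
    · exact hij (hSj.channel_eq_of_equiv_aNilP hE hb (by split_ifs <;> omega) hj hjk)

/-- For `k ≥ 2` and pairwise distinct channels
`a_1, …, a_k`, no branching bisimulation on `P_RCCS` relates two distinct
nodes `N_i = C_i{R/X}` and `N_j = C_j{R/X}` of the probabilistic ring
`R = μX.C_1`, where `C_k = ½τ.a_k.0 ⊕ ½τ.X` and
`C_j = ½τ.a_j.0 ⊕ ½τ.C_{j+1}` for `1 ≤ j < k`. -/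
theorem ring_nodes_not_bisimilar {Chan : Type} (k : ℕ) (hk : 2 ≤ k) (a : ℕ → Chan)
    (hdist : ∀ i j, 1 ≤ i → i ≤ k → 1 ≤ j → j ≤ k → a i = a j → i = j)
    (i j : ℕ) (hi1 : 1 ≤ i) (hik : i ≤ k) (hj1 : 1 ≤ j) (hjk : j ≤ k) (hij : i ≠ j)
    (E : Proc Chan → Proc Chan → Prop) (hE : IsBB E) :
    ¬ E (NtermP a k i) (NtermP a k j) :=
  ring_nodes_not_bisimilar_general k a i j hi1 hik hj1 hjk
    (fun h => hij (hdist i j hi1 hik hj1 hjk h)) E hE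
end
end
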